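/- Let R be a commutative Noetherian local ring and X a resolving subcategory of finitely generated R-modules. Then for every prime ideal p of R, the additive closure add_{R_p}(X_p) of the localized subcategory is a resolving subcategory of finitely generated R_p-modules: it contains R_p and is closed under direct summands, extensions, and syzygies. -/

import Mathlib

open CategoryTheory IsLocalRing

noncomputable section

/-- `K` is (isomorphic to) the first syzygy of `M`, i.e. the kernel of a
minimal free cover of `M`. -/
def IsSyzygyOf (R : Type) [CommRing R] [IsLocalRing R]
    (K M : ModuleCat.{0} R) : Prop :=
  ∃ (n : ℕ) (f : (Fin n → R) →ₗ[R] M),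
    Function.Surjective f ∧
    LinearMap.ker f ≤ (maximalIdeal R) • (⊤ : Submodule R (Fin n → R)) ∧
    Nonempty (K ≃ₗ[R] LinearMap.ker f)

/-- The additive closure `add_{R_p}(X_p)` of the localization at `p` of a
subcategory `S`: direct summands of finite direct sums of localizations of
modules in `S`. -/
def addLocalized (R : Type) [CommRing R] (p : Ideal R) [p.IsPrime]
    (S : Set (ModuleCat.{0} R)) :
    Set (ModuleCat.{0} (Localization p.primeCompl)) :=
  { N | ∃ (k : ℕ) (Xs : Fin k → ModuleCat.{0} R), (∀ i, Xs i ∈ S) ∧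
      ∃ L : ModuleCat.{0} (Localization p.primeCompl),
        Nonempty ((Π i, LocalizedModule p.primeCompl ↥(Xs i))
          ≃ₗ[Localization p.primeCompl] (↥N × ↥L)) }

/-!
Given `0 → A → B → C → 0` over `M⁻¹R`, add complements to `A` and `C` so that the outer terms become
`M⁻¹X` and `M⁻¹Y` with `X, Y ∈ S`. If `0 → K → F → Y → 0` is exact with `F` free, the extension is
the pushout of the localized one along some `ψ : K → M⁻¹X`. The module `K` is finitely presented,
as `S` is resolving and consists of finitely generated modules; so after clearing a denominator `ψ`
comes from a map `K → X`, and the pushout of `F` along that map is an extension of `Y` by `X` in `S`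
localizing to the middle term.

For kernels, a surjection `G → C` with `G` projective and kernel `L` gives
`0 → L → A × G → B → 0`, and adding a complement of `C` to both `B` and `C` allows `L` to be the
localization of a syzygy.
-/

universe u

open Function (Injective Surjective Bijective Exact)
open LinearMap

section Exact

variable {R A B C K G : Type*} [Ring R]
  [AddCommGroup A] [Module R A] [AddCommGroup B] [Module R B] [AddCommGroup C] [Module R C]
  [AddCommGroup K] [Module R K] [AddCommGroup G] [Module R G]

theorem exact_prodMap {A' B' C' : Type*} [AddCommGroup A'] [Module R A'] [AddCommGroup B']
    [Module R B'] [AddCommGroup C'] [Module R C']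
    {f : A →ₗ[R] B} {g : B →ₗ[R] C} {f' : A' →ₗ[R] B'} {g' : B' →ₗ[R] C'}
    (h : Exact f g) (h' : Exact f' g') : Exact (f.prodMap f') (g.prodMap g') := by
  rw [exact_iff, ker_prodMap, range_prodMap, h.linearMap_ker_eq, h'.linearMap_ker_eq]

theorem exists_lift_of_exact [Module.Projective R G] {f : A →ₗ[R] B} {g : B →ₗ[R] C}
    (hf : Injective f) (hg : Surjective g) (hfg : Exact f g)
    {κ : K →ₗ[R] G} {π : G →ₗ[R] C} (hκπ : π ∘ₗ κ = 0) :
    ∃ (σ : G →ₗ[R] B) (ψ : K →ₗ[R] A), g ∘ₗ σ = π ∧ f ∘ₗ ψ = σ ∘ₗ κ := by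
  obtain ⟨σ, hσ⟩ := Module.projective_lifting_property g π hg
  have hσκ (k : K) : (σ ∘ₗ κ) k ∈ range f := by
    rw [← hfg.linearMap_ker_eq, mem_ker, ← LinearMap.comp_apply, ← LinearMap.comp_assoc, hσ, hκπ,
      LinearMap.zero_apply]
  refine ⟨σ, (LinearEquiv.ofInjective f hf).symm ∘ₗ (σ ∘ₗ κ).codRestrict (range f) hσκ, hσ, ?_⟩
  ext k
  simp

theorem exists_exact_prod_of_projective [Module.Projective R G] {f : A →ₗ[R] B} {g : B →ₗ[R] C}
    (hf : Injective f) (hg : Surjective g) (hfg : Exact f g)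
    {κ : K →ₗ[R] G} {π : G →ₗ[R] C} (hκ : Injective κ) (hπ : Surjective π) (hκπ : Exact κ π) :
    ∃ (i : K →ₗ[R] A × G) (q : A × G →ₗ[R] B), Injective i ∧ Surjective q ∧ Exact i q := by
  obtain ⟨σ, ψ, hσ, hψ⟩ := exists_lift_of_exact hf hg hfg hκπ.linearMap_comp_eq_zero
  replace hσ (x : G) : g (σ x) = π x := congr($hσ x)
  replace hψ (k : K) : f (ψ k) = σ (κ k) := congr($hψ k)
  refine ⟨(-ψ).prod κ, f.coprod σ, fun _ _ h ↦ hκ congr(($h).2), fun b ↦ ?_, ?_⟩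
  · obtain ⟨x, hx⟩ := hπ (g b)
    obtain ⟨a, ha⟩ := (hfg (b - σ x)).mp (by rw [map_sub, hσ, hx, sub_self])
    exact ⟨(a, x), by simp [ha]⟩
  · rintro ⟨a, x⟩
    constructor
    · intro h
      replace h : f a + σ x = 0 := h
      obtain ⟨k, rfl⟩ := (hκπ x).mp <| by
        simpa [hσ, hfg.apply_apply_eq_zero] using congr(g $h)
      refine ⟨k, Prod.ext (hf ?_) rfl⟩
      rw [← hψ] at h
      simpa using (eq_neg_of_add_eq_zero_left h).symm
    · rintro ⟨k, hk⟩
      obtain ⟨rfl, rfl⟩ := Prod.ext_iff.mp hk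
      simp [hψ]

theorem bijective_of_exact {A' B' C' : Type*} [AddCommGroup A'] [Module R A'] [AddCommGroup B']
    [Module R B'] [AddCommGroup C'] [Module R C']
    {f : A →ₗ[R] B} {g : B →ₗ[R] C} (hg : Surjective g) (hfg : Exact f g)
    {f' : A' →ₗ[R] B'} {g' : B' →ₗ[R] C'} (hf' : Injective f') (hfg' : Exact f' g')
    {a : A →ₗ[R] A'} {b : B →ₗ[R] B'} {c : C →ₗ[R] C'} (ha : Bijective a) (hc : Bijective c)
    (hl : f' ∘ₗ a = b ∘ₗ f) (hr : g' ∘ₗ b = c ∘ₗ g) : Bijective b := by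
  replace hl (x : A) : f' (a x) = b (f x) := congr($hl x)
  replace hr (y : B) : g' (b y) = c (g y) := congr($hr y)
  constructor
  · refine (injective_iff_map_eq_zero b).mpr fun y hy ↦ ?_
    obtain ⟨x, rfl⟩ := (hfg y).mp <| hc.injective (by rw [← hr, hy, map_zero, map_zero])
    have hx : x = 0 := ha.injective <| hf' (by rw [hl, hy, map_zero, map_zero])
    rw [hx, map_zero]
  · intro z
    obtain ⟨w, hw⟩ := hc.surjective (g' z)
    obtain ⟨y, rfl⟩ := hg w
    obtain ⟨x', hx'⟩ := (hfg' (z - b y)).mp (by rw [map_sub, hr, hw, sub_self])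
    obtain ⟨x, rfl⟩ := ha.surjective x'
    exact ⟨y + f x, by rw [map_add, ← hl, hx', add_sub_cancel]⟩

end Exact

/-- The pushout of `α : K → X` and `ι : K → F`, with the sign put on `ι`. -/
abbrev ModulePushout {R K X F : Type*} [Ring R] [AddCommGroup K] [Module R K]
    [AddCommGroup X] [Module R X] [AddCommGroup F] [Module R F]
    (α : K →ₗ[R] X) (ι : K →ₗ[R] F) : Type _ :=
  (X × F) ⧸ range (α.prod (-ι))

namespace ModulePushout

variable {R K X F B : Type*} [Ring R] [AddCommGroup K] [Module R K]
  [AddCommGroup X] [Module R X] [AddCommGroup F] [Module R F] [AddCommGroup B] [Module R B]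
  (α : K →ₗ[R] X) (ι : K →ₗ[R] F)

/-- The map `X → X ⊔_K F` into the pushout. -/
def inl : X →ₗ[R] ModulePushout α ι := Submodule.mkQ _ ∘ₗ LinearMap.inl R X F

/-- The map `F → X ⊔_K F` into the pushout. -/
def inr : F →ₗ[R] ModulePushout α ι := Submodule.mkQ _ ∘ₗ LinearMap.inr R X F

variable {α ι}

theorem inl_apply_eq_inr_apply (k : K) : inl α ι (α k) = inr α ι (ι k) :=
  (Submodule.Quotient.eq _).mpr ⟨k, by simp⟩

theorem exists_eq_inl_add_inr (z : ModulePushout α ι) : ∃ x v, z = inl α ι x + inr α ι v := by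
  obtain ⟨⟨x, v⟩, rfl⟩ := Submodule.mkQ_surjective _ z
  exact ⟨x, v, by simp [inl, inr, ← Submodule.Quotient.mk_add]⟩

theorem hom_ext {a b : ModulePushout α ι →ₗ[R] B} (hl : a ∘ₗ inl α ι = b ∘ₗ inl α ι)
    (hr : a ∘ₗ inr α ι = b ∘ₗ inr α ι) : a = b :=
  Submodule.linearMap_qext _ (LinearMap.prod_ext hl hr)

/-- The map out of the pushout given by its universal property. -/
def desc (a : X →ₗ[R] B) (b : F →ₗ[R] B) (h : a ∘ₗ α = b ∘ₗ ι) : ModulePushout α ι →ₗ[R] B :=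
  Submodule.liftQ _ (a.coprod b) <| range_le_ker_iff.mpr <| by
    ext k
    simpa [add_neg_eq_zero] using congr($h k)

variable {a : X →ₗ[R] B} {b : F →ₗ[R] B} (h : a ∘ₗ α = b ∘ₗ ι)

@[simp]
theorem desc_inl (x : X) : desc a b h (inl α ι x) = a x := by
  simp [desc, inl]

@[simp]
theorem desc_inr (v : F) : desc a b h (inr α ι v) = b v := by
  simp [desc, inr]

theorem inl_injective (hι : Injective ι) : Injective (inl α ι) := by
  refine (injective_iff_map_eq_zero _).mpr fun x hx ↦ ?_
  obtain ⟨k, hk⟩ := (Submodule.Quotient.mk_eq_zero _).mp hx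
  obtain ⟨hαk, hιk⟩ := Prod.ext_iff.mp hk
  have : k = 0 := hι (by simpa using hιk)
  simpa [this] using hαk.symm

theorem exact_inl_desc {Y : Type*} [AddCommGroup Y] [Module R Y] {π : F →ₗ[R] Y}
    (hιπ : Exact ι π) (h : (0 : X →ₗ[R] Y) ∘ₗ α = π ∘ₗ ι) : Exact (inl α ι) (desc 0 π h) := by
  refine exact_of_comp_of_mem_range (LinearMap.ext fun x ↦ desc_inl h x) fun z hz ↦ ?_
  obtain ⟨x, v, rfl⟩ := exists_eq_inl_add_inr z
  obtain ⟨k, rfl⟩ := (hιπ v).mp (by simpa using hz)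
  exact ⟨x + α k, by rw [map_add, inl_apply_eq_inr_apply]⟩

end ModulePushout

section Localization

variable {R X Y Z X' Y' B : Type*} [CommRing R] (M : Submonoid R)
  [AddCommGroup X] [Module R X] [AddCommGroup Y] [Module R Y]
  [AddCommGroup Z] [Module R Z] [AddCommGroup X'] [Module R X'] [AddCommGroup Y'] [Module R Y']
  [AddCommGroup B] [Module R B]

theorem isUnit_algebraMap_end_of_exact {f : X' →ₗ[R] B} {g : B →ₗ[R] Y'} (hf : Injective f)
    (hg : Surjective g) (hfg : Exact f g) (s : R)
    (hX' : IsUnit (algebraMap R (Module.End R X') s))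
    (hY' : IsUnit (algebraMap R (Module.End R Y') s)) :
    IsUnit (algebraMap R (Module.End R B) s) := by
  rw [Module.End.isUnit_iff] at hX' hY' ⊢
  exact bijective_of_exact hg hfg hf hfg hX' hY' (by ext; simp) (by ext; simp)

theorem isLocalizedModule_of_exact (lX : X →ₗ[R] X') [IsLocalizedModule M lX] (lY : Y →ₗ[R] Y')
    [IsLocalizedModule M lY] {i : X →ₗ[R] Z} {q : Z →ₗ[R] Y} (hq : Surjective q) (hiq : Exact i q)
    {f : X' →ₗ[R] B} {g : B →ₗ[R] Y'} (hf : Injective f) (hg : Surjective g) (hfg : Exact f g)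
    {h : Z →ₗ[R] B} (hl : h ∘ₗ i = f ∘ₗ lX) (hr : g ∘ₗ h = lY ∘ₗ q) : IsLocalizedModule M h := by
  have hB (s : M) : IsUnit (algebraMap R (Module.End R B) s) :=
    isUnit_algebraMap_end_of_exact hf hg hfg s (IsLocalizedModule.map_units lX s)
      (IsLocalizedModule.map_units lY s)
  let lZ := LocalizedModule.mkLinearMap M Z
  let j : LocalizedModule M Z →ₗ[R] B := IsLocalizedModule.lift M lZ h hB
  have hj : j ∘ₗ lZ = h := IsLocalizedModule.lift_comp M lZ h hB
  have hj_left : f ∘ₗ .id = j ∘ₗ IsLocalizedModule.map M lX lZ i := by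
    refine IsLocalizedModule.ext M lX hB ?_
    rw [comp_assoc _ _ j, IsLocalizedModule.map_comp, ← comp_assoc, hj, hl, comp_id]
  have hj_right : g ∘ₗ j = .id ∘ₗ IsLocalizedModule.map M lZ lY q := by
    refine IsLocalizedModule.ext M lZ (IsLocalizedModule.map_units lY) ?_
    rw [comp_assoc, hj, hr, id_comp, IsLocalizedModule.map_comp]
  have hj_bij : Bijective j := bijective_of_exact
    (IsLocalizedModule.map_surjective M lZ lY q hq) (IsLocalizedModule.map_exact M lX lZ lY i q hiq)
    hf hfg Function.bijective_id Function.bijective_id hj_left hj_right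
  rw [← hj]
  exact (IsLocalizedModule.comp_iff_of_bijective_left M j hj_bij).mpr inferInstance

theorem exists_isLocalizedModule_comp_eq (lX : X →ₗ[R] X') [IsLocalizedModule M lX] {K : Type*}
    [AddCommGroup K] [Module R K] [Module.FinitePresentation R K] (ψ : K →ₗ[R] X') :
    ∃ (l : X →ₗ[R] X') (α : K →ₗ[R] X), IsLocalizedModule M l ∧ l ∘ₗ α = ψ := by
  obtain ⟨α, s, hα⟩ := Module.FinitePresentation.exists_lift_of_isLocalizedModule M lX ψ
  have hs := (Module.End.isUnit_iff _).mp (IsLocalizedModule.map_units lX s)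
  let e : X' ≃ₗ[R] X' := .ofBijective _ hs
  refine ⟨e.symm ∘ₗ lX, α, inferInstance, ?_⟩
  rw [comp_assoc, hα, ← LinearEquiv.eq_toLinearMap_symm_comp]
  rfl

theorem exists_extension_isLocalizedModule (lX : X →ₗ[R] X') [IsLocalizedModule M lX]
    (lY : Y →ₗ[R] Y') [IsLocalizedModule M lY] {K F : Type*} [AddCommGroup K] [Module R K]
    [Module.FinitePresentation R K] [AddCommGroup F] [Module R F] [Module.Projective R F]
    {ι : K →ₗ[R] F} {π : F →ₗ[R] Y} (hι : Injective ι) (hπ : Surjective π) (hιπ : Exact ι π)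
    {f : X' →ₗ[R] B} {g : B →ₗ[R] Y'} (hf : Injective f) (hg : Surjective g) (hfg : Exact f g) :
    ∃ (α : K →ₗ[R] X) (i : X →ₗ[R] ModulePushout α ι) (q : ModulePushout α ι →ₗ[R] Y)
      (h : ModulePushout α ι →ₗ[R] B),
      Injective i ∧ Surjective q ∧ Exact i q ∧ IsLocalizedModule M h := by
  obtain ⟨φ, ψ, hφ, hψ⟩ := exists_lift_of_exact (κ := ι) hf hg hfg (π := lY ∘ₗ π) <| by
    rw [comp_assoc, hιπ.linearMap_comp_eq_zero, comp_zero]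
  obtain ⟨l, α, _, hα⟩ := exists_isLocalizedModule_comp_eq M lX ψ
  have hq : (0 : X →ₗ[R] Y) ∘ₗ α = π ∘ₗ ι := by rw [zero_comp, hιπ.linearMap_comp_eq_zero]
  have hh : (f ∘ₗ l) ∘ₗ α = φ ∘ₗ ι := by rw [comp_assoc, hα, hψ]
  let i := ModulePushout.inl α ι
  let q := ModulePushout.desc 0 π hq
  let h := ModulePushout.desc (f ∘ₗ l) φ hh
  have hi_inj : Injective i := ModulePushout.inl_injective hι
  have hq_surj : Surjective q := by
    refine Surjective.of_comp (g := ModulePushout.inr α ι) ?_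
    simpa [q, Function.comp_def] using hπ
  have hiq : Exact i q := ModulePushout.exact_inl_desc hιπ hq
  have hgh : g ∘ₗ h = lY ∘ₗ q := by
    apply ModulePushout.hom_ext
    · ext x
      simp [h, q, hfg.apply_apply_eq_zero]
    · ext v
      simpa [h, q] using congr($hφ v)
  exact ⟨α, i, q, h, hi_inj, hq_surj, hiq, isLocalizedModule_of_exact M l lY hq_surj hiq hf hg hfg
    (LinearMap.ext fun x ↦ ModulePushout.desc_inl hh x) hgh⟩

/-- The isomorphism of `M⁻¹R`-modules from `LocalizedModule M X` to a localization of `X` at `M`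
given by an `R`-linear map. -/
def localizedModuleEquiv (lX : X →ₗ[R] X') [IsLocalizedModule M lX]
    [Module (Localization M) X'] [IsScalarTower R (Localization M) X'] :
    LocalizedModule M X ≃ₗ[Localization M] X' :=
  (IsLocalizedModule.iso M lX).extendScalarsOfIsLocalization M (Localization M)

end Localization

/-- A resolving subcategory of the category of finitely generated `R`-modules, given by its objects.
Closure under isomorphisms and finite direct sums is a consequence, see `IsResolving.mem_of_equiv`
and `IsResolving.pi_mem`. -/
structure IsResolving {R : Type u} [Ring R] (S : Set (ModuleCat.{u} R)) : Prop where
  finite {A : ModuleCat.{u} R} : A ∈ S → Module.Finite R A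
  self_mem : ModuleCat.of R R ∈ S
  mem_of_equiv_prod {A B C : ModuleCat.{u} R} : A ∈ S → (A ≃ₗ[R] B × C) → B ∈ S
  mem_of_exact {A B C : ModuleCat.{u} R} {f : A →ₗ[R] B} {g : B →ₗ[R] C} :
    Injective f → Surjective g → Exact f g → A ∈ S → C ∈ S → B ∈ S
  ker_mem_of_exact {A B C : ModuleCat.{u} R} {f : A →ₗ[R] B} {g : B →ₗ[R] C} :
    Injective f → Surjective g → Exact f g → B ∈ S → C ∈ S → A ∈ S

namespace IsResolving

section Ring

variable {R : Type u} [Ring R] {S : Set (ModuleCat.{u} R)} (hS : IsResolving S)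
include hS

theorem mem_of_equiv {A B : ModuleCat.{u} R} (hA : A ∈ S) (e : A ≃ₗ[R] B) : B ∈ S :=
  hS.mem_of_equiv_prod (C := .of R PUnit) hA (e.trans LinearEquiv.prodUnique.symm)

theorem prod_mem {A B : ModuleCat.{u} R} (hA : A ∈ S) (hB : B ∈ S) : ModuleCat.of R (A × B) ∈ S :=
  hS.mem_of_exact (B := .of R (A × B)) inl_injective snd_surjective .inl_snd hA hB

theorem pi_mem {k : ℕ} {X : Fin k → ModuleCat.{u} R} (hX : ∀ i, X i ∈ S) :
    ModuleCat.of R (∀ i, X i) ∈ S := by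
  induction k with
  | zero =>
    exact hS.mem_of_equiv_prod (B := .of R (∀ i, X i)) (C := .of R R) hS.self_mem
      (LinearEquiv.uniqueProd (R := R) (M := R) (M₂ := ∀ i, X i)).symm
  | succ k ih =>
    exact hS.mem_of_equiv (B := .of R (∀ i, X i)) (hS.prod_mem (hX 0) (ih fun i ↦ hX i.succ))
      (Fin.consLinearEquiv R fun i ↦ X i)

theorem ker_mem {A : ModuleCat.{u} R} (hA : A ∈ S) {n : ℕ} {π : (Fin n → R) →ₗ[R] A}
    (hπ : Surjective π) : ModuleCat.of R (ker π) ∈ S :=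
  hS.ker_mem_of_exact (A := .of R (ker π)) (B := .of R (Fin n → R))
    (Submodule.subtype_injective _) hπ (exact_subtype_ker_map π) (hS.pi_mem fun _ ↦ hS.self_mem) hA

theorem finitePresentation {A : ModuleCat.{u} R} (hA : A ∈ S) : Module.FinitePresentation R A := by
  have := hS.finite hA
  obtain ⟨n, π, hπ⟩ := Module.Finite.exists_fin' R A
  have : Module.Finite R (ker π) := hS.finite (hS.ker_mem hA hπ)
  exact Module.finitePresentation_of_surjective π hπ (Module.Finite.iff_fg.mp this)

end Ring

theorem mem_of_isSyzygyOf {R : Type} [CommRing R] [IsLocalRing R] {S : Set (ModuleCat.{0} R)}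
    (hS : IsResolving S) {A K : ModuleCat.{0} R} (hA : A ∈ S) (hK : IsSyzygyOf R K A) : K ∈ S := by
  obtain ⟨n, f, hf, -, ⟨e⟩⟩ := hK
  exact hS.mem_of_equiv (hS.ker_mem hA hf) e.symm

end IsResolving

section AddLocalization

variable {R : Type u} [CommRing R] (M : Submonoid R) {S : Set (ModuleCat.{u} R)}

/-- The additive closure of the localization of `S` at an arbitrary multiplicative set `M`; for the
complement of a prime ideal this is `addLocalized`. -/
def addLocalization (S : Set (ModuleCat.{u} R)) : Set (ModuleCat.{u} (Localization M)) :=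
  {N | ∃ (k : ℕ) (X : Fin k → ModuleCat.{u} R), (∀ i, X i ∈ S) ∧
    ∃ L : ModuleCat.{u} (Localization M),
      Nonempty ((∀ i, LocalizedModule M (X i)) ≃ₗ[Localization M] N × L)}

variable {M}

theorem mem_addLocalization_of_equiv_prod {X : ModuleCat.{u} R}
    {N L : ModuleCat.{u} (Localization M)} (hX : X ∈ S)
    (e : LocalizedModule M X ≃ₗ[Localization M] N × L) : N ∈ addLocalization M S :=
  ⟨1, fun _ ↦ X, fun _ ↦ hX, L,
    ⟨(LinearEquiv.funUnique (Fin 1) (Localization M) (LocalizedModule M X)).trans e⟩⟩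

theorem mem_addLocalization_of_equiv {X : ModuleCat.{u} R} {N : ModuleCat.{u} (Localization M)}
    (hX : X ∈ S) (e : LocalizedModule M X ≃ₗ[Localization M] N) : N ∈ addLocalization M S :=
  mem_addLocalization_of_equiv_prod (L := .of (Localization M) PUnit) hX
    (e.trans LinearEquiv.prodUnique.symm)

namespace IsResolving

variable (hS : IsResolving S)
include hS

theorem exists_equiv_prod_of_mem_addLocalization {N : ModuleCat.{u} (Localization M)}
    (hN : N ∈ addLocalization M S) :
    ∃ X ∈ S, ∃ L : ModuleCat.{u} (Localization M),
      Nonempty (LocalizedModule M X ≃ₗ[Localization M] N × L) := by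
  obtain ⟨k, X, hX, L, ⟨e⟩⟩ := hN
  let l : (∀ i, X i) →ₗ[R] ∀ i, LocalizedModule M (X i) :=
    .pi fun i ↦ LocalizedModule.mkLinearMap M (X i) ∘ₗ .proj i
  exact ⟨_, hS.pi_mem hX, L, ⟨(localizedModuleEquiv M l).trans e⟩⟩

theorem finite_of_mem_addLocalization {N : ModuleCat.{u} (Localization M)}
    (hN : N ∈ addLocalization M S) : Module.Finite (Localization M) N := by
  obtain ⟨X, hX, L, ⟨e⟩⟩ := hS.exists_equiv_prod_of_mem_addLocalization hN
  have := hS.finite hX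
  have : Module.Finite (Localization M) (LocalizedModule M X) :=
    .of_isLocalizedModule M (LocalizedModule.mkLinearMap M X)
  exact .of_surjective (fst (Localization M) N L ∘ₗ e.toLinearMap)
    (Prod.fst_surjective.comp e.surjective)

theorem self_mem_addLocalization :
    ModuleCat.of (Localization M) (Localization M) ∈ addLocalization M S :=
  mem_addLocalization_of_equiv hS.self_mem
    (localizedModuleEquiv M (Algebra.linearMap R (Localization M)))

theorem addLocalization_mem_of_equiv_prod {A B C : ModuleCat.{u} (Localization M)}
    (hA : A ∈ addLocalization M S) (e : A ≃ₗ[Localization M] B × C) : B ∈ addLocalization M S := by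
  obtain ⟨X, hX, L, ⟨eX⟩⟩ := hS.exists_equiv_prod_of_mem_addLocalization hA
  exact mem_addLocalization_of_equiv_prod (L := .of (Localization M) (C × L)) hX <|
    eX.trans <| (e.prodCongr (.refl _ _)).trans (.prodAssoc _ _ _ _)

theorem exists_localizedModule_equiv_of_exact {X Y : ModuleCat.{u} R} (hX : X ∈ S) (hY : Y ∈ S)
    {N : ModuleCat.{u} (Localization M)} {f : LocalizedModule M X →ₗ[Localization M] N}
    {g : N →ₗ[Localization M] LocalizedModule M Y} (hf : Injective f) (hg : Surjective g)
    (hfg : Exact f g) :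
    ∃ Z ∈ S, Nonempty (LocalizedModule M Z ≃ₗ[Localization M] N) := by
  let : Module R N := Module.compHom N (algebraMap R (Localization M))
  have : IsScalarTower R (Localization M) N := .of_algebraMap_smul fun _ _ ↦ rfl
  have := hS.finite hY
  obtain ⟨n, π, hπ⟩ := Module.Finite.exists_fin' R Y
  have : Module.FinitePresentation R (ker π) := hS.finitePresentation (hS.ker_mem hY hπ)
  obtain ⟨α, i, q, h, hi, hq, hiq, _⟩ := exists_extension_isLocalizedModule M
    (LocalizedModule.mkLinearMap M X) (LocalizedModule.mkLinearMap M Y)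
    (ker π).subtype_injective hπ (exact_subtype_ker_map π)
    (f := f.restrictScalars R) (g := g.restrictScalars R) hf hg hfg
  exact ⟨.of R (ModulePushout α (ker π).subtype), hS.mem_of_exact hi hq hiq hX hY,
    ⟨localizedModuleEquiv M h⟩⟩

theorem addLocalization_mem_of_exact {A B C : ModuleCat.{u} (Localization M)}
    {f : A →ₗ[Localization M] B} {g : B →ₗ[Localization M] C} (hf : Injective f)
    (hg : Surjective g) (hfg : Exact f g) (hA : A ∈ addLocalization M S)
    (hC : C ∈ addLocalization M S) : B ∈ addLocalization M S := by
  obtain ⟨X, hX, A', ⟨eA⟩⟩ := hS.exists_equiv_prod_of_mem_addLocalization hA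
  obtain ⟨Y, hY, C', ⟨eC⟩⟩ := hS.exists_equiv_prod_of_mem_addLocalization hC
  let f' := f.prodMap (inl (Localization M) A' C')
  let g' := g.prodMap (snd (Localization M) A' C')
  have hf' : Injective f' := hf.prodMap (inl_injective (R := Localization M))
  have hg' : Surjective g' := hg.prodMap Prod.snd_surjective
  have hfg' : Exact f' g' := exact_prodMap hfg .inl_snd
  obtain ⟨Z, hZ, ⟨eZ⟩⟩ := hS.exists_localizedModule_equiv_of_exact hX hY
    (N := .of (Localization M) (B × (A' × C'))) (f := f' ∘ₗ eA) (g := eC.symm ∘ₗ g')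
    (hf'.comp eA.injective) (eC.symm.surjective.comp hg')
    (LinearEquiv.precomp_exact_iff_exact.mpr (LinearEquiv.postcomp_exact_iff_exact.mpr hfg'))
  exact mem_addLocalization_of_equiv_prod (L := .of (Localization M) (A' × C')) hZ eZ

theorem exists_syzygy_localizedModule {X : ModuleCat.{u} R} (hX : X ∈ S) :
    ∃ K ∈ S, ∃ (n : ℕ) (κ : LocalizedModule M K →ₗ[Localization M] LocalizedModule M (Fin n → R))
      (π : LocalizedModule M (Fin n → R) →ₗ[Localization M] LocalizedModule M X),
      Injective κ ∧ Surjective π ∧ Exact κ π := by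
  have := hS.finite hX
  obtain ⟨n, π, hπ⟩ := Module.Finite.exists_fin' R X
  exact ⟨.of R (ker π), hS.ker_mem hX hπ, n, LocalizedModule.map M (ker π).subtype,
    LocalizedModule.map M π, LocalizedModule.map_injective M _ (ker π).subtype_injective,
    LocalizedModule.map_surjective M _ hπ,
    LocalizedModule.map_exact M _ _ (exact_subtype_ker_map π)⟩

theorem addLocalization_ker_mem_of_exact {A B C : ModuleCat.{u} (Localization M)}
    {f : A →ₗ[Localization M] B} {g : B →ₗ[Localization M] C} (hf : Injective f)
    (hg : Surjective g) (hfg : Exact f g) (hB : B ∈ addLocalization M S)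
    (hC : C ∈ addLocalization M S) : A ∈ addLocalization M S := by
  obtain ⟨X, hX, C', ⟨e⟩⟩ := hS.exists_equiv_prod_of_mem_addLocalization hC
  have hC' : C' ∈ addLocalization M S :=
    mem_addLocalization_of_equiv_prod hX (e.trans (.prodComm _ _ _))
  have hBC' : ModuleCat.of (Localization M) (B × C') ∈ addLocalization M S :=
    hS.addLocalization_mem_of_exact (B := .of (Localization M) (B × C'))
      inl_injective snd_surjective .inl_snd hB hC'
  obtain ⟨K, hK, n, κ, π, hκ, hπ, hκπ⟩ := hS.exists_syzygy_localizedModule (M := M) hX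
  let G := LocalizedModule M (Fin n → R)
  have hKM : ModuleCat.of (Localization M) (LocalizedModule M K) ∈ addLocalization M S :=
    mem_addLocalization_of_equiv hK (.refl _ _)
  let f' : A →ₗ[Localization M] B × C' := inl (Localization M) B C' ∘ₗ f
  let g' : B × C' →ₗ[Localization M] LocalizedModule M X := e.symm ∘ₗ g.prodMap .id
  have hf' : Injective f' := (inl_injective (R := Localization M)).comp hf
  have hg' : Surjective g' := e.symm.surjective.comp (hg.prodMap Function.surjective_id)
  have hfg' : Exact f' g' := LinearEquiv.postcomp_exact_iff_exact.mpr <| by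
    rintro ⟨b, c⟩
    simp [f', hfg b, Prod.ext_iff, eq_comm (a := c)]
  obtain ⟨i, q, hi, hq, hiq⟩ := exists_exact_prod_of_projective (K := LocalizedModule M K)
    (G := G) hf' hg' hfg' hκ hπ hκπ
  have hAG : ModuleCat.of (Localization M) (A × G) ∈ addLocalization M S :=
    hS.addLocalization_mem_of_exact (B := .of (Localization M) (A × G)) hi hq hiq hKM hBC'
  exact hS.addLocalization_mem_of_equiv_prod (C := .of (Localization M) G) hAG (.refl _ _)

end IsResolving

end AddLocalization

theorem addLocalized_resolving_general {R : Type u} [CommRing R] (M : Submonoid R)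
    {S : Set (ModuleCat.{u} R)} (hS : IsResolving S) : IsResolving (addLocalization M S) where
  finite := hS.finite_of_mem_addLocalization
  self_mem := hS.self_mem_addLocalization
  mem_of_equiv_prod := hS.addLocalization_mem_of_equiv_prod
  mem_of_exact := hS.addLocalization_mem_of_exact
  ker_mem_of_exact := hS.addLocalization_ker_mem_of_exact

/-- if `S` is a resolving subcategory of finitely generated
`R`-modules, then for every prime `p` the additive closure
`add_{R_p}(S_p)` is a resolving subcategory of finitely generated
`R_p`-modules: it contains `R_p` and is closed under direct summands,
extensions and syzygies. -/
theorem addLocalized_resolving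
    (R : Type) [CommRing R] [IsLocalRing R] [IsNoetherianRing R]
    (S : Set (ModuleCat.{0} R))
    (hfg : ∀ A ∈ S, Module.Finite R ↥A)
    (hiso : ∀ A B : ModuleCat.{0} R, A ∈ S → Nonempty (A ≃ₗ[R] B) → B ∈ S)
    (hR : ModuleCat.of R R ∈ S)
    (hsummand : ∀ A B C : ModuleCat.{0} R, A ∈ S →
      Nonempty (A ≃ₗ[R] (↥B × ↥C)) → B ∈ S)
    (hext : ∀ (A B C : ModuleCat.{0} R) (f : A →ₗ[R] B) (g : B →ₗ[R] C),
      Function.Injective f → Function.Surjective g →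
      LinearMap.range f = LinearMap.ker g → A ∈ S → C ∈ S → B ∈ S)
    (hker : ∀ (A B C : ModuleCat.{0} R) (f : A →ₗ[R] B) (g : B →ₗ[R] C),
      Function.Injective f → Function.Surjective g →
      LinearMap.range f = LinearMap.ker g → B ∈ S → C ∈ S → A ∈ S)
    (p : Ideal R) [p.IsPrime] :
    (ModuleCat.of (Localization p.primeCompl) (Localization p.primeCompl)
      ∈ addLocalized R p S) ∧
    (∀ A B C : ModuleCat.{0} (Localization p.primeCompl),
      A ∈ addLocalized R p S →
      Nonempty (A ≃ₗ[Localization p.primeCompl] (↥B × ↥C)) →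
      B ∈ addLocalized R p S) ∧
    (∀ (A B C : ModuleCat.{0} (Localization p.primeCompl))
      (f : A →ₗ[Localization p.primeCompl] B)
      (g : B →ₗ[Localization p.primeCompl] C),
      Function.Injective f → Function.Surjective g →
      LinearMap.range f = LinearMap.ker g →
      A ∈ addLocalized R p S → C ∈ addLocalized R p S →
      B ∈ addLocalized R p S) ∧
    (∀ A ∈ addLocalized R p S,
      ∀ K : ModuleCat.{0} (Localization p.primeCompl),
        IsSyzygyOf (Localization p.primeCompl) K A →
        K ∈ addLocalized R p S) := by
  have hS : IsResolving S := {
    finite := hfg _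
    self_mem := hR
    mem_of_equiv_prod := fun hA e ↦ hsummand _ _ _ hA ⟨e⟩
    mem_of_exact := fun hf hg h ↦ hext _ _ _ _ _ hf hg h.linearMap_ker_eq.symm
    ker_mem_of_exact := fun hf hg h ↦ hker _ _ _ _ _ hf hg h.linearMap_ker_eq.symm }
  have hSp : IsResolving (addLocalized R p S) := addLocalized_resolving_general p.primeCompl hS
  exact ⟨hSp.self_mem, fun _ _ _ hA ⟨e⟩ ↦ hSp.mem_of_equiv_prod hA e,
    fun _ _ _ _ _ hf hg h ↦ hSp.mem_of_exact hf hg (LinearMap.exact_iff.mpr h.symm),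
    fun _ hA _ hK ↦ hSp.mem_of_isSyzygyOf hA hK⟩
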